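/- For each r = 2, 3, …, n, let 𝒞_r be the event that the subgraph of 𝔾_on(n,K_n,P_n,p_n) induced on a fixed set of r nodes is connected. Then P[𝒞_r] ≤ r^{r−2} · p_e^{r−1}. -/

import Mathlib

open MeasureTheory Filter Asymptotics
open scoped ENNReal

noncomputable section

/-- Key rings: `K`-element subsets of a key pool of size `P`. -/
abbrev KeyRing (P K : ℕ) : Type := {s : Finset (Fin P) // s.card = K}

instance (P K : ℕ) : MeasurableSpace (KeyRing P K) := ⊤

/-- The uniform probability measure on key rings. -/
def uniformKeyMeasure (P K : ℕ) : Measure (KeyRing P K) :=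
  (Fintype.card (KeyRing P K) : ℝ≥0∞)⁻¹ • (Measure.count : Measure (KeyRing P K))

/-- The Bernoulli measure with parameter `p` on `Bool`. -/
def bern (p : ℝ) : Measure Bool :=
  ENNReal.ofReal p • Measure.dirac true + ENNReal.ofReal (1 - p) • Measure.dirac false

/-- Sample space underlying `𝔾_on(n, K, P, p)`: independent key rings for the `n`
nodes together with independent on/off channel states for each pair of nodes. -/
abbrev GonSpace (n K P : ℕ) : Type :=
  (Fin n → KeyRing P K) × (Sym2 (Fin n) → Bool)

/-- The probability measure of the model `𝔾_on(n, K, P, p)`: the key rings of the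
`n` nodes are independent and uniform, and the channels are independent
Bernoulli(`p`) variables, independent of the key rings. -/
def gonMeasure (n K P : ℕ) (p : ℝ) : Measure (GonSpace n K P) :=
  (Measure.pi fun _ : Fin n => uniformKeyMeasure P K).prod
    (Measure.pi fun _ : Sym2 (Fin n) => bern p)

/-- The random graph `𝔾_on`: an edge is present iff the key rings intersect and the
channel between the two nodes is on. -/
def gonGraph {n K P : ℕ} (ω : GonSpace n K P) : SimpleGraph (Fin n) where
  Adj i j := i ≠ j ∧ ((ω.1 i).1 ∩ (ω.1 j).1).Nonempty ∧ ω.2 s(i, j) = true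
  symm := by
    constructor
    rintro i j ⟨h1, h2, h3⟩
    exact ⟨h1.symm, by rwa [Finset.inter_comm], by rwa [Sym2.eq_swap]⟩
  loopless := ⟨fun i h => h.1 rfl⟩

/-- The random key graph `G(n, K, P)`: an edge is present iff the key rings intersect. -/
def rkgGraph {n K P : ℕ} (ω : Fin n → KeyRing P K) : SimpleGraph (Fin n) where
  Adj i j := i ≠ j ∧ ((ω i).1 ∩ (ω j).1).Nonempty
  symm := by
    constructor
    rintro i j ⟨h1, h2⟩
    exact ⟨h1.symm, by rwa [Finset.inter_comm]⟩
  loopless := ⟨fun i h => h.1 rfl⟩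

/-- The probability measure of the random key graph model. -/
def rkgMeasure (n K P : ℕ) : Measure (Fin n → KeyRing P K) :=
  Measure.pi fun _ : Fin n => uniformKeyMeasure P K

/-- Degree of a vertex. -/
def gDeg {V : Type*} (G : SimpleGraph V) (v : V) : ℕ := Nat.card {w // G.Adj v w}

/-- Minimum vertex degree. -/
def minDeg {V : Type*} (G : SimpleGraph V) : ℕ := sInf (Set.range (gDeg G))

/-- A graph is `k`-connected if it remains connected after the removal of any
`k - 1` of its vertices. -/
def KConnected {V : Type*} (G : SimpleGraph V) (k : ℕ) : Prop :=
  ∀ S : Finset V, S.card ≤ k - 1 → (G.induce ((S : Set V)ᶜ)).Connected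

/-- Vertex connectivity: the least number of vertices whose deletion disconnects
the graph. -/
def vertexConn {V : Type*} (G : SimpleGraph V) : ℕ :=
  sInf {m | ∃ S : Finset V, S.card = m ∧ ¬ (G.induce ((S : Set V)ᶜ)).Connected}

/-- `p_s`: the probability that two key rings share at least one key. -/
def psf (K P : ℕ) : ℝ :=
  if 2 * K ≤ P then 1 - (Nat.choose (P - K) K : ℝ) / (Nat.choose P K : ℝ) else 1

/-- `p_e = p · p_s`: the probability of an edge in `𝔾_on`. -/
def pef (K P : ℕ) (p : ℝ) : ℝ := p * psf K P

/-- The event `D_{x,ℓ}` that the node with index `x` has degree exactly `ℓ`. -/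
def degEvent (n K P : ℕ) (x ℓ : ℕ) : Set (GonSpace n K P) :=
  {ω | ∃ hx : x < n, gDeg (gonGraph ω) ⟨x, hx⟩ = ℓ}

/-- The event `E_{xy}` that the edge between the nodes with indices `x`, `y` is present. -/
def edgeEvent (n K P : ℕ) (x y : ℕ) : Set (GonSpace n K P) :=
  {ω | ∃ (hx : x < n) (hy : y < n), (gonGraph ω).Adj ⟨x, hx⟩ ⟨y, hy⟩}

/-- The event that the key rings of nodes `x` and `y` share exactly `u` keys. -/
def interCardEvent (n K P : ℕ) (x y u : ℕ) : Set (GonSpace n K P) :=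
  {ω | ∃ (hx : x < n) (hy : y < n), ((ω.1 ⟨x, hx⟩).1 ∩ (ω.1 ⟨y, hy⟩).1).card = u}

/-- The event `K_{xy}` that the key rings of nodes `x` and `y` share at least one key. -/
def keyShareEvent (n K P : ℕ) (x y : ℕ) : Set (GonSpace n K P) :=
  {ω | ∃ (hx : x < n) (hy : y < n), ((ω.1 ⟨x, hx⟩).1 ∩ (ω.1 ⟨y, hy⟩).1).Nonempty}

/-- `r_n = min(⌊P/K⌋, ⌊n/2⌋)`. -/
def rn (n K P : ℕ) : ℕ := min (P / K) (n / 2)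

/-- The threshold array `J`. -/
def Jarr (n K P : ℕ) (ε lam mu : ℝ) (i : ℕ) : ℕ :=
  if i ≤ rn n K P then max ⌊(1 + ε) * (K : ℝ)⌋₊ ⌊lam * (K : ℝ) * (i : ℝ)⌋₊
  else ⌊mu * (P : ℝ)⌋₊

/-- The event `𝓔(J)`: some set `T` of at least two nodes has a union of key rings of
size at most `J_{|T|}`. -/
def EJ (n K P : ℕ) (ε lam mu : ℝ) : Set (GonSpace n K P) :=
  {ω | ∃ T : Finset (Fin n), 2 ≤ T.card ∧
    (T.biUnion fun i => (ω.1 i).1).card ≤ Jarr n K P ε lam mu T.card}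

/-- Parent functions of the forests on `A ∪ B` whose roots are the vertices of `A`: every vertex of
`B` is sent to a vertex of `A ∪ B` of smaller depth, and all other vertices are fixed. -/
def forestParents {V : Type*} [Fintype V] [DecidableEq V] (A B : Finset V) : Finset (V → V) :=
  open Classical in
  Finset.univ.filter fun f =>
    (∀ v, v ∉ B → f v = v) ∧ ∃ d : V → ℕ, ∀ v ∈ B, f v ∈ A ∪ B ∧ d (f v) < d v

theorem mem_forestParents {V : Type*} [Fintype V] [DecidableEq V] {A B : Finset V} {f : V → V} :
    f ∈ forestParents A B ↔
      (∀ v, v ∉ B → f v = v) ∧ ∃ d : V → ℕ, ∀ v ∈ B, f v ∈ A ∪ B ∧ d (f v) < d v := by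
  simp [forestParents]

theorem forestParents_empty_right {V : Type*} [Fintype V] [DecidableEq V] (A : Finset V) :
    forestParents A ∅ = {id} := by
  ext f
  simp [mem_forestParents, funext_iff]

theorem forestParents_empty_left {V : Type*} [Fintype V] [DecidableEq V] {B : Finset V}
    (hB : B.Nonempty) : forestParents ∅ B = ∅ := by
  refine Finset.eq_empty_of_forall_notMem fun f hf => ?_
  obtain ⟨-, d, hd⟩ := mem_forestParents.1 hf
  obtain ⟨v, hv, hmin⟩ := B.exists_min_image d hB
  obtain ⟨h1, h2⟩ := hd v hv
  exact (hmin _ (by simpa using h1)).not_gt h2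

theorem sum_powerset_card_mul_pow {V : Type*} [DecidableEq V] (N : ℕ) (B : Finset V) (c : ℕ) :
    (∑ S ∈ B.powerset, (c + S.card) * N ^ (B.card - S.card)) * (N + 1) =
      (c * (N + 1) + B.card) * (N + 1) ^ B.card := by
  induction B using Finset.induction_on generalizing c with
  | empty => simp
  | insert b B hb ih =>
    rw [Finset.sum_powerset_insert hb]
    have h1 : ∑ S ∈ B.powerset, (c + S.card) * N ^ ((insert b B).card - S.card) =
        N * ∑ S ∈ B.powerset, (c + S.card) * N ^ (B.card - S.card) := by
      rw [Finset.mul_sum]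
      refine Finset.sum_congr rfl fun S hS => ?_
      have := Finset.card_le_card (Finset.mem_powerset.1 hS)
      rw [Finset.card_insert_of_notMem hb, Nat.sub_add_comm this, pow_succ]
      ring
    have h2 : ∑ S ∈ B.powerset, (c + (insert b S).card) * N ^ ((insert b B).card -
        (insert b S).card) = ∑ S ∈ B.powerset, (c + 1 + S.card) * N ^ (B.card - S.card) := by
      refine Finset.sum_congr rfl fun S hS => ?_
      rw [Finset.card_insert_of_notMem hb,
        Finset.card_insert_of_notMem fun h => hb (Finset.mem_powerset.1 hS h),
        Nat.add_sub_add_right]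
      ring
    rw [h1, h2, add_mul, mul_assoc, ih, ih, Finset.card_insert_of_notMem hb]
    ring

/-- Deleting a root turns its children into roots. -/
theorem card_forestParents_le_sum {V : Type*} [Fintype V] [DecidableEq V] {A B : Finset V} {a : V}
    (ha : a ∈ A) (hAB : Disjoint A B) :
    (forestParents A B).card ≤
      ∑ S ∈ B.powerset, (forestParents (A.erase a ∪ S) (B \ S)).card := by
  rw [← Finset.card_sigma]
  have haB : a ∉ B := Finset.disjoint_left.1 hAB ha
  refine Finset.card_le_card_of_injOn
    (fun f => (⟨B.filter fun v => f v = a, fun v => if f v = a then v else f v⟩ :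
      (_ : Finset V) × (V → V))) ?_ ?_
  · intro f hf
    obtain ⟨hid, d, hd⟩ := mem_forestParents.1 hf
    refine Finset.mem_coe.2 (Finset.mem_sigma.2 ⟨by simp, mem_forestParents.2 ⟨?_, d, ?_⟩⟩)
    · intro v hv
      by_cases h : f v = a
      · simp [h]
      · simp only [Finset.mem_sdiff, Finset.mem_filter] at hv
        simpa [h] using hid v (by tauto)
    · intro v hv
      simp only [Finset.mem_sdiff, Finset.mem_filter] at hv
      have h : f v ≠ a := by tauto
      obtain ⟨h1, h2⟩ := hd v hv.1
      simp only [h, if_false, h2, and_true]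
      simp only [Finset.mem_union, Finset.mem_sdiff, Finset.mem_filter, Finset.mem_erase] at h1 ⊢
      tauto
  · intro f hf g hg hfg
    obtain ⟨hfid, -⟩ := mem_forestParents.1 hf
    obtain ⟨hgid, -⟩ := mem_forestParents.1 hg
    simp only [Sigma.mk.injEq, heq_eq_eq] at hfg
    obtain ⟨h1, h2⟩ := hfg
    funext v
    by_cases hv : v ∈ B
    · have h3 : f v = a ↔ g v = a := by simpa [hv] using Finset.ext_iff.1 h1 v
      by_cases h : f v = a
      · rw [h, h3.1 h]
      · simpa [h, mt h3.2 h] using congrFun h2 v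
    · rw [hfid v hv, hgid v hv]

/-- The upper bound in Cayley's formula for rooted forests. -/
theorem card_forestParents_mul_le {V : Type*} [Fintype V] [DecidableEq V] {A B : Finset V}
    (hAB : Disjoint A B) :
    (forestParents A B).card * (A.card + B.card) ≤ A.card * (A.card + B.card) ^ B.card := by
  induction hn : A.card + B.card generalizing A B with
  | zero => simp
  | succ N ih =>
    rcases B.eq_empty_or_nonempty with rfl | hB
    · simp [forestParents_empty_right] at hn ⊢
      omega
    rcases A.eq_empty_or_nonempty with rfl | ⟨a, ha⟩
    · simp [forestParents_empty_left hB]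
    have hAc := Finset.card_erase_add_one ha
    have hBpos := hB.card_pos
    have hNpos : 0 < N := by have := Finset.card_pos.2 ⟨a, ha⟩; omega
    have hle : (forestParents A B).card * N ≤
        ∑ S ∈ B.powerset, ((A.erase a).card + S.card) * N ^ (B.card - S.card) := by
      refine (Nat.mul_le_mul_right N (card_forestParents_le_sum ha hAB)).trans ?_
      rw [Finset.sum_mul]
      refine Finset.sum_le_sum fun S hS => ?_
      have hSB := Finset.mem_powerset.1 hS
      have hdis : Disjoint (A.erase a) S :=
        Finset.disjoint_of_subset_left (Finset.erase_subset _ _)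
          (Finset.disjoint_of_subset_right hSB hAB)
      have hdis2 : Disjoint (A.erase a ∪ S) (B \ S) :=
        Finset.disjoint_union_left.2 ⟨Finset.disjoint_of_subset_left (Finset.erase_subset _ _)
          (Finset.disjoint_of_subset_right Finset.sdiff_subset hAB), Finset.disjoint_sdiff⟩
      have hc1 := Finset.card_union_of_disjoint hdis
      have hc2 := Finset.card_sdiff_of_subset hSB
      have hc3 := Finset.card_le_card hSB
      have := ih hdis2 (by omega)
      rwa [hc1, hc2] at this
    have h2 := Nat.mul_le_mul_right (N + 1) hle
    rw [sum_powerset_card_mul_pow] at h2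
    have h3 : (A.erase a).card * (N + 1) + B.card = A.card * N := by
      zify at hAc hn ⊢
      have h4 : ((A.erase a).card : ℤ) = A.card - 1 := by linarith
      have h5 : (B.card : ℤ) = N + 1 - A.card := by linarith
      rw [h4, h5]; ring
    rw [h3] at h2
    refine Nat.le_of_mul_le_mul_left ?_ hNpos
    calc _ = (forestParents A B).card * N * (N + 1) := by ring
      _ ≤ _ := h2
      _ = _ := by ring

/-- If every value is related to at most `D` values, each vertex of `B` whose value must be related
to that of its parent costs a factor `D / card R`. -/
theorem card_parent_related_mul_pow_le {V R : Type*} [Fintype V] [DecidableEq V] [Fintype R]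
    (rel : R → R → Prop) [DecidableRel rel] (D : ℕ)
    (hD : ∀ x, (Finset.univ.filter fun y => rel y x).card ≤ D)
    (f : V → V) (d : V → ℕ) (B : Finset V) (hd : ∀ v ∈ B, d (f v) < d v) :
    (Finset.univ.filter fun s : V → R => ∀ v ∈ B, rel (s v) (s (f v))).card *
      Fintype.card R ^ B.card ≤ Fintype.card R ^ Fintype.card V * D ^ B.card := by
  classical
  induction B using Finset.induction_on_max_value d with
  | empty => simp
  | insert v B hv hmax ih =>
    have hB : ∀ w ∈ B, d (f w) < d w := fun w hw => hd w (Finset.mem_insert_of_mem hw)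
    have hvf : f v ≠ v := fun h => by
      have := hd v (Finset.mem_insert_self _ _)
      rw [h] at this
      exact lt_irrefl _ this
    have hfB : ∀ w ∈ B, f w ≠ v := fun w hw h => by
      have h1 := hB w hw
      have h2 := hmax w hw
      rw [h] at h1
      omega
    have hstep : (Finset.univ.filter fun s : V → R =>
          ∀ w ∈ insert v B, rel (s w) (s (f w))).card * Fintype.card R ≤
        (Finset.univ.filter fun s : V → R => ∀ w ∈ B, rel (s w) (s (f w))).card * D := by
      rw [← Finset.card_univ (α := R), ← Finset.card_product]
      refine le_trans (b := ((Finset.univ.filter fun s : V → R =>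
        ∀ w ∈ B, rel (s w) (s (f w))).sigma fun s =>
          Finset.univ.filter fun y => rel y (s (f v))).card) ?_ ?_
      · refine Finset.card_le_card_of_injOn
          (fun x => (⟨Function.update x.1 v x.2, x.1 v⟩ : (_ : V → R) × R)) ?_ ?_
        · rintro ⟨s, y⟩ hs
          simp only [Finset.coe_product, Finset.coe_filter, Finset.mem_univ, true_and,
            Finset.coe_univ, Set.mem_prod, Set.mem_ofPred_eq, Set.mem_univ, and_true] at hs
          simp only [Finset.coe_sigma, Set.mem_sigma_iff, Finset.coe_filter, Finset.mem_univ,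
            true_and, Set.mem_ofPred_eq]
          refine ⟨fun w hw => ?_, ?_⟩
          · rw [Function.update_of_ne (ne_of_mem_of_not_mem hw hv), Function.update_of_ne (hfB w hw)]
            exact hs w (Finset.mem_insert_of_mem hw)
          · rw [Function.update_of_ne hvf]
            exact hs v (Finset.mem_insert_self _ _)
        · rintro ⟨s, y⟩ - ⟨t, z⟩ - h
          simp only [Sigma.mk.injEq, heq_eq_eq] at h
          obtain ⟨h1, h2⟩ := h
          have h3 : y = z := by simpa using congrFun h1 v
          refine Prod.ext (funext fun w => ?_) h3
          by_cases hw : w = v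
          · subst hw; exact h2
          · simpa [hw] using congrFun h1 w
      · rw [Finset.card_sigma]
        exact (Finset.sum_le_card_nsmul _ _ D fun s _ => hD _).trans (by simp)
    rw [Finset.card_insert_of_notMem hv, pow_succ', ← mul_assoc]
    calc _ ≤ _ := Nat.mul_le_mul_right _ hstep
      _ = _ := by rw [mul_right_comm]
      _ ≤ _ := Nat.mul_le_mul_right _ (ih hB)
      _ = _ := by ring

theorem card_keyRing (P K : ℕ) : Fintype.card (KeyRing P K) = P.choose K := by
  simp

theorem card_keyRing_inter_nonempty {P K : ℕ} (x : KeyRing P K) :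
    (Finset.univ.filter fun y : KeyRing P K => (y.1 ∩ x.1).Nonempty).card =
      P.choose K - (P - K).choose K := by
  have h1 : (Finset.univ.filter fun y : KeyRing P K => ¬ (y.1 ∩ x.1).Nonempty).card =
      (P - K).choose K := by
    rw [show (P - K).choose K = (Finset.powersetCard K x.1ᶜ).card by
      simp [Finset.card_compl, x.2]]
    refine Finset.card_bij (fun y _ => y.1) ?_ ?_ ?_
    · intro y hy
      simp only [Finset.mem_filter, Finset.mem_univ, true_and, Finset.not_nonempty_iff_eq_empty]
        at hy
      rw [Finset.mem_powersetCard, Finset.subset_compl_iff_disjoint_right]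
      exact ⟨Finset.disjoint_iff_inter_eq_empty.2 hy, y.2⟩
    · intro y _ z _ h
      exact Subtype.ext h
    · intro y hy
      rw [Finset.mem_powersetCard, Finset.subset_compl_iff_disjoint_right] at hy
      refine ⟨⟨y, hy.2⟩, ?_, rfl⟩
      simpa [Finset.not_nonempty_iff_eq_empty] using Finset.disjoint_iff_inter_eq_empty.1 hy.1
  have h2 := Finset.card_filter_add_card_filter_not
    (s := (Finset.univ : Finset (KeyRing P K))) fun y => (y.1 ∩ x.1).Nonempty
  rw [h1, Finset.card_univ, card_keyRing] at h2
  omega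

theorem psf_eq_div {K P : ℕ} (hKP : K ≤ P) :
    psf K P = ((P.choose K - (P - K).choose K : ℕ) : ℝ) / (P.choose K : ℕ) := by
  have hpos : (0 : ℝ) < P.choose K := by exact_mod_cast Nat.choose_pos hKP
  unfold psf
  split_ifs with h
  · rw [Nat.cast_sub (Nat.choose_le_choose K (Nat.sub_le P K)), sub_div, div_self hpos.ne']
  · rw [Nat.choose_eq_zero_of_lt (show P - K < K by omega), Nat.sub_zero, div_self hpos.ne']

theorem isProbabilityMeasure_uniformKeyMeasure {K P : ℕ} (hKP : K ≤ P) :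
    IsProbabilityMeasure (uniformKeyMeasure P K) := by
  constructor
  have h : (Fintype.card (KeyRing P K) : ℝ≥0∞) ≠ 0 := by
    rw [card_keyRing]
    exact_mod_cast (Nat.choose_pos hKP).ne'
  rw [uniformKeyMeasure, Measure.smul_apply, Measure.count_univ, smul_eq_mul,
    ENat.card_eq_coe_fintype_card]
  exact ENNReal.inv_mul_cancel h (by simp)

theorem isProbabilityMeasure_bern {p : ℝ} (hp0 : 0 ≤ p) (hp1 : p ≤ 1) :
    IsProbabilityMeasure (bern p) := by
  constructor
  simp only [bern, Measure.coe_add, Measure.coe_smul, Pi.add_apply, Pi.smul_apply, measure_univ,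
    smul_eq_mul, mul_one]
  rw [← ENNReal.ofReal_add hp0 (by linarith)]
  simp

/-- Along an acyclic parent function, the key-sharing events are at most as likely as if they were
independent. -/
theorem pi_uniformKeyMeasure_parent_le {n K P : ℕ} (hKP : K ≤ P) (f : Fin n → Fin n)
    (d : Fin n → ℕ) (B : Finset (Fin n)) (hd : ∀ v ∈ B, d (f v) < d v) :
    (Measure.pi fun _ : Fin n => uniformKeyMeasure P K)
      {s | ∀ v ∈ B, ((s v).1 ∩ (s (f v)).1).Nonempty} ≤ ENNReal.ofReal (psf K P) ^ B.card := by
  have := isProbabilityMeasure_uniformKeyMeasure hKP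
  have hcard := card_parent_related_mul_pow_le (R := KeyRing P K)
    (fun y x => (y.1 ∩ x.1).Nonempty) _ (fun x => (card_keyRing_inter_nonempty x).le) f d B hd
  rw [card_keyRing, Fintype.card_fin] at hcard
  set M := P.choose K with hM
  set D := M - (P - K).choose K
  have hMpos : 0 < M := Nat.choose_pos hKP
  have hM0 : (M : ℝ≥0∞) ≠ 0 := by exact_mod_cast hMpos.ne'
  have hMt : (M : ℝ≥0∞) ≠ ∞ := ENNReal.natCast_ne_top M
  have hset : {s : Fin n → KeyRing P K | ∀ v ∈ B, ((s v).1 ∩ (s (f v)).1).Nonempty} =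
      ↑(Finset.univ.filter fun s : Fin n → KeyRing P K =>
        ∀ v ∈ B, ((s v).1 ∩ (s (f v)).1).Nonempty) := by
    ext; simp
  have hsingle : ∀ s : Fin n → KeyRing P K,
      (Measure.pi fun _ : Fin n => uniformKeyMeasure P K) {s} = ((M : ℝ≥0∞) ^ n)⁻¹ := by
    intro s
    rw [Measure.pi_singleton]
    simp [uniformKeyMeasure, ← hM, ENNReal.inv_pow]
  have hdiv : ((D : ℝ≥0∞) / M) ^ B.card = (D : ℝ≥0∞) ^ B.card / (M : ℝ≥0∞) ^ B.card := by
    rw [div_eq_mul_inv, mul_pow, ← ENNReal.inv_pow, div_eq_mul_inv]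
  rw [hset, ← sum_measure_singleton]
  simp only [hsingle, Finset.sum_const, nsmul_eq_mul]
  rw [psf_eq_div hKP, ENNReal.ofReal_div_of_pos (by exact_mod_cast hMpos), ENNReal.ofReal_natCast,
    ENNReal.ofReal_natCast, hdiv, ← div_eq_mul_inv,
    ENNReal.div_le_iff (pow_ne_zero _ hM0) (ENNReal.pow_ne_top hMt), mul_comm,
    ← mul_div_assoc, ENNReal.le_div_iff_mul_le (Or.inl (pow_ne_zero _ hM0))
      (Or.inl (ENNReal.pow_ne_top hMt))]
  norm_cast
  convert hcard

theorem pi_bern_parent {n : ℕ} {p : ℝ} (hp0 : 0 ≤ p) (hp1 : p ≤ 1) (f : Fin n → Fin n)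
    (d : Fin n → ℕ) (B : Finset (Fin n)) (hd : ∀ v ∈ B, d (f v) < d v) :
    (Measure.pi fun _ : Sym2 (Fin n) => bern p) {c | ∀ v ∈ B, c s(v, f v) = true} =
      ENNReal.ofReal p ^ B.card := by
  classical
  have := isProbabilityMeasure_bern hp0 hp1
  have hinj : Set.InjOn (fun v => s(v, f v)) (B : Set (Fin n)) := by
    intro v hv w hw h
    simp only [Sym2.eq_iff] at h
    rcases h with h | ⟨h1, h2⟩
    · exact h.1
    · have h3 := hd v hv
      have h4 := hd w hw
      rw [h2] at h3
      rw [← h1] at h4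
      omega
  have hset : {c : Sym2 (Fin n) → Bool | ∀ v ∈ B, c s(v, f v) = true} =
      Set.univ.pi fun e => if e ∈ B.image (fun v => s(v, f v)) then {true} else Set.univ := by
    ext c
    simp only [Set.mem_ofPred_eq, Set.mem_univ_pi]
    constructor
    · intro h e
      split_ifs with he
      · obtain ⟨v, hv, rfl⟩ := Finset.mem_image.1 he
        exact h v hv
      · trivial
    · intro h v hv
      have := h s(v, f v)
      rwa [if_pos (Finset.mem_image_of_mem _ hv)] at this
  have hmeas : ∀ e : Sym2 (Fin n),
      bern p (if e ∈ B.image (fun v => s(v, f v)) then {true} else Set.univ) =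
        if e ∈ B.image (fun v => s(v, f v)) then ENNReal.ofReal p else 1 := by
    intro e
    split_ifs
    · simp [bern]
    · exact measure_univ
  rw [hset, Measure.pi_pi]
  simp only [hmeas]
  rw [Finset.prod_ite_mem, Finset.univ_inter, Finset.prod_const, Finset.card_image_of_injOn hinj]

theorem gonMeasure_parent_le {n K P : ℕ} {p : ℝ} (hKP : K ≤ P) (hp0 : 0 ≤ p) (hp1 : p ≤ 1)
    (f : Fin n → Fin n) (d : Fin n → ℕ) (B : Finset (Fin n)) (hd : ∀ v ∈ B, d (f v) < d v) :
    gonMeasure n K P p {ω | ∀ v ∈ B, (gonGraph ω).Adj v (f v)} ≤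
      ENNReal.ofReal (pef K P p) ^ B.card := by
  have := isProbabilityMeasure_uniformKeyMeasure hKP
  have := isProbabilityMeasure_bern hp0 hp1
  calc _ ≤ gonMeasure n K P p
        ({s | ∀ v ∈ B, ((s v).1 ∩ (s (f v)).1).Nonempty} ×ˢ
          {c | ∀ v ∈ B, c s(v, f v) = true}) :=
        measure_mono fun ω h => ⟨fun v hv => (h v hv).2.1, fun v hv => (h v hv).2.2⟩
    _ = _ := Measure.prod_prod _ _
    _ ≤ ENNReal.ofReal (psf K P) ^ B.card * ENNReal.ofReal p ^ B.card := by
        rw [pi_bern_parent hp0 hp1 f d B hd]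
        gcongr
        exact pi_uniformKeyMeasure_parent_le hKP f d B hd
    _ = _ := by rw [pef, ENNReal.ofReal_mul hp0, mul_pow, mul_comm]

/-- A connected induced subgraph contains a spanning tree rooted at any prescribed vertex. -/
theorem exists_forestParents_of_connected_induce {V : Type*} [Fintype V] [DecidableEq V]
    {G : SimpleGraph V} {T : Finset V} {a : V} (ha : a ∈ T)
    (hG : (G.induce (T : Set V)).Connected) :
    ∃ f ∈ forestParents {a} (T.erase a), ∀ v ∈ T.erase a, G.Adj v (f v) := by
  set H := G.induce (T : Set V)
  let d : V → ℕ := fun x => if h : x ∈ T then H.dist ⟨x, h⟩ ⟨a, ha⟩ else 0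
  have hex : ∀ v, ∃ w, (v ∉ T.erase a → w = v) ∧
      (v ∈ T.erase a → (w ∈ {a} ∪ T.erase a ∧ d w < d v) ∧ G.Adj v w) := by
    intro v
    by_cases hv : v ∈ T.erase a
    · obtain ⟨hva, hvT⟩ := Finset.mem_erase.1 hv
      obtain ⟨q, hq⟩ := (hG.preconnected ⟨v, hvT⟩ ⟨a, ha⟩).exists_walk_length_eq_dist
      cases q with
      | nil => exact absurd rfl hva
      | @cons _ w _ hadj q =>
        refine ⟨w.1, fun h => absurd hv h, fun _ => ⟨⟨?_, ?_⟩, hadj⟩⟩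
        · by_cases hw : w.1 = a
          · simp [hw]
          · simp [hw]
        · have hwT : w.1 ∈ T := w.2
          simp only [d, hwT, hvT, dif_pos]
          have hle := SimpleGraph.dist_le q
          rw [SimpleGraph.Walk.length_cons] at hq
          change H.dist w _ < _
          omega
    · exact ⟨v, fun _ => rfl, fun h => absurd h hv⟩
  choose f hf1 hf2 using hex
  exact ⟨f, mem_forestParents.2 ⟨hf1, d, fun v hv => (hf2 v hv).1⟩, fun v hv => (hf2 v hv).2⟩

/-- bound on the probability that a fixed set of `r` nodes
induces a connected subgraph of `𝔾_on`. -/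
theorem gon_induced_connected_bound
    (n K P : ℕ) (p : ℝ) (hKP : K ≤ P) (hp0 : 0 < p) (hp1 : p < 1)
    (r : ℕ) (hr2 : 2 ≤ r) (hrn : r ≤ n)
    (T : Finset (Fin n)) (hT : T.card = r) :
    gonMeasure n K P p
        {ω | ((gonGraph ω).induce (T : Set (Fin n))).Connected} ≤
      ENNReal.ofReal ((r : ℝ) ^ (r - 2) * pef K P p ^ (r - 1)) := by
  obtain ⟨a, ha⟩ : T.Nonempty := Finset.card_pos.1 (by omega)
  have hBcard : (T.erase a).card = r - 1 := by rw [Finset.card_erase_of_mem ha, hT]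
  have hpe : 0 ≤ pef K P p := by
    rw [pef, psf_eq_div hKP]
    positivity
  have hcount : (forestParents {a} (T.erase a)).card ≤ r ^ (r - 2) := by
    have h := card_forestParents_mul_le (A := {a}) (B := T.erase a) (by simp)
    rw [hBcard, Finset.card_singleton, show 1 + (r - 1) = r by omega, one_mul,
      show r - 1 = r - 2 + 1 by omega, pow_succ] at h
    exact Nat.le_of_mul_le_mul_right h (by omega)
  calc _ ≤ gonMeasure n K P p (⋃ f ∈ forestParents {a} (T.erase a),
          {ω | ∀ v ∈ T.erase a, (gonGraph ω).Adj v (f v)}) := by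
        refine measure_mono fun ω hω => ?_
        obtain ⟨f, hf, hadj⟩ := exists_forestParents_of_connected_induce ha hω
        exact Set.mem_biUnion hf hadj
    _ ≤ ∑ f ∈ forestParents {a} (T.erase a),
          gonMeasure n K P p {ω | ∀ v ∈ T.erase a, (gonGraph ω).Adj v (f v)} :=
        measure_biUnion_finset_le _ _
    _ ≤ (forestParents {a} (T.erase a)).card • ENNReal.ofReal (pef K P p) ^ (r - 1) := by
        refine Finset.sum_le_card_nsmul _ _ _ fun f hf => ?_
        obtain ⟨-, d, hd⟩ := mem_forestParents.1 hf
        rw [← hBcard]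
        exact gonMeasure_parent_le hKP hp0.le hp1.le f d _ fun v hv => (hd v hv).2
    _ ≤ ((r ^ (r - 2) : ℕ) : ℝ≥0∞) * ENNReal.ofReal (pef K P p) ^ (r - 1) := by
        rw [nsmul_eq_mul]
        gcongr
    _ = _ := by
        rw [ENNReal.ofReal_mul (by positivity), ENNReal.ofReal_pow hpe,
          ENNReal.ofReal_pow (by positivity), ENNReal.ofReal_natCast, Nat.cast_pow]
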